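/- (Theorem 3) The number of distinct gaps of the binary inclusion-exclusion polynomial satisfies #G(p,q) ≤ p − 1, and #G(p,q) ≥ k, where k is the integer determined by F_k < p ≤ F_{k+1} and F₁ = 1, F₂ = 2, F₃ = 3, F₄ = 5, ... are the Fibonacci numbers (F_{k+1} = F_k + F_{k−1}). -/

import Mathlib

/-!
In the power series ring, `Q_{p,q} = (1 - X) * ∑ s ∈ S, X ^ s` for the numerical semigroup
`S = ⟨p, q⟩`, so the exponents of `Q_{p,q}` are the places where membership in `S` changes. A run
of constancy of length `p` contains a multiple of `p`, hence lies in `S`, and then so does every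
later number; thus every gap is at most `p - 1`.

For the lower bound, put the points `0, q, 2q, …` one after the other on the circle `ZMod p`. At
each stage the distances between neighbouring points are gaps of `S` because `p < q`, and a distance
`d ≥ 2` gives the gap `d - 1` of `Q_{p,q}`. The first distance is `p`. The first point that falls
into an arc of length `d > 2` splits it into two arcs of *different* lengths: if `l * q` were the
midpoint of the arc from `i * q` to `j * q`, then `2 * l ≡ i + j`, so `p ≤ 2 * l`, and then one of
the points `l * q ± 1` would have been put inside the arc earlier. Hence consecutive distances grow
at most as fast as the Fibonacci numbers.
-/

/-- The set of differences of consecutive elements of a set of natural numbers. The gapset of a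
polynomial is `gapset` of its support. -/
def gapset (s : Set ℕ) : Set ℕ :=
  {d | ∃ a b, a ∈ s ∧ b ∈ s ∧ a < b ∧ (∀ c ∈ s, ¬ (a < c ∧ c < b)) ∧ d = b - a}

theorem pos_of_mem_gapset {s : Set ℕ} {d : ℕ} (hd : d ∈ gapset s) : 0 < d := by
  obtain ⟨a, b, -, -, hab, -, rfl⟩ := hd
  exact Nat.sub_pos_of_lt hab

theorem le_of_mem_gapset {s : Set ℕ} {p d : ℕ} (hp : 0 < p) (hs : ∀ n ∈ s, n + p ∈ s)
    (hd : d ∈ gapset s) : d ≤ p := by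
  obtain ⟨a, b, ha, -, -, hgap, rfl⟩ := hd
  by_contra! hlt
  exact hgap (a + p) (hs a ha) ⟨by omega, by omega⟩

section IndicatorSeries

open PowerSeries
open scoped Polynomial

variable {R : Type*}

/-- The generating function `∑ n ∈ s, X ^ n` of a set `s` of natural numbers. -/
noncomputable def indicatorSeries (R : Type*) [Semiring R] (s : Set ℕ) : R⟦X⟧ :=
  mk (s.indicator 1)

@[simp]
theorem coeff_indicatorSeries [Semiring R] (s : Set ℕ) (n : ℕ) :
    coeff n (indicatorSeries R s) = s.indicator 1 n :=
  coeff_mk _ _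

theorem indicatorSeries_coe_finset [Semiring R] (s : Finset ℕ) :
    indicatorSeries R (s : Set ℕ) = ∑ n ∈ s, X ^ n := by
  classical
  ext n
  simp [coeff_X_pow, Set.indicator_apply]

theorem indicatorSeries_mul_X_pow [Semiring R] (s : Set ℕ) (p : ℕ) :
    indicatorSeries R s * X ^ p = indicatorSeries R ((· + p) '' s) := by
  classical
  ext n
  rw [coeff_mul_X_pow', coeff_indicatorSeries, coeff_indicatorSeries]
  split_ifs with hpn
  · obtain ⟨m, rfl⟩ := Nat.exists_eq_add_of_le' hpn
    simp [Set.indicator_apply]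
  · refine (Set.indicator_of_notMem ?_ _).symm
    rintro ⟨m, -, rfl⟩
    exact hpn (Nat.le_add_left p m)

theorem indicatorSeries_diff [Ring R] {s t : Set ℕ} (hts : t ⊆ s) :
    indicatorSeries R (s \ t) = indicatorSeries R s - indicatorSeries R t := by
  ext n
  rw [map_sub, coeff_indicatorSeries, coeff_indicatorSeries, coeff_indicatorSeries]
  exact congrFun (Set.indicator_sdiff hts (1 : ℕ → R)) n

/-- The Apéry set of `s` with respect to `p`, usually written `{n ∈ s | n - p ∉ s}`; the form below
avoids truncated subtraction. -/
def aperySet (s : Set ℕ) (p : ℕ) : Set ℕ :=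
  s \ (· + p) '' s

theorem indicatorSeries_mul_one_sub_X_pow [Ring R] {s : Set ℕ} {p : ℕ}
    (hs : ∀ n ∈ s, n + p ∈ s) :
    indicatorSeries R s * (1 - X ^ p) = indicatorSeries R (aperySet s p) := by
  rw [mul_sub, mul_one, indicatorSeries_mul_X_pow, aperySet,
    indicatorSeries_diff (Set.image_subset_iff.mpr hs)]

variable [Ring R] [Nontrivial R] {s : Set ℕ} {Q : R[X]}

theorem succ_mem_support_iff (hQ : (Q : R⟦X⟧) = (1 - X) * indicatorSeries R s) (n : ℕ) :
    n + 1 ∈ Q.support ↔ ¬ (n + 1 ∈ s ↔ n ∈ s) := by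
  classical
  rw [Polynomial.mem_support_iff, ← Polynomial.coeff_coe, hQ, sub_mul, one_mul, map_sub,
    coeff_succ_X_mul, coeff_indicatorSeries, coeff_indicatorSeries]
  by_cases hn : n ∈ s <;> by_cases hn' : n + 1 ∈ s <;> simp [hn, hn']

theorem mem_gapset_support_of_succ_mem_gapset
    (hQ : (Q : R⟦X⟧) = (1 - X) * indicatorSeries R s) {d : ℕ} (hd : 0 < d)
    (hgap : d + 1 ∈ gapset s) : d ∈ gapset (Q.support : Set ℕ) := by
  obtain ⟨a, b, ha, hb, hab, hbetween, hsub⟩ := hgap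
  obtain rfl : b = a + d + 1 := by omega
  have notMem {c : ℕ} (hac : a < c) (hcb : c < a + d + 1) : c ∉ s :=
    fun hc => hbetween c hc ⟨hac, hcb⟩
  refine ⟨a + 1, a + d + 1, ?_, ?_, by omega, ?_, by omega⟩
  · have := notMem (c := a + 1) (by omega) (by omega)
    simp [succ_mem_support_iff hQ, this, ha]
  · have := notMem (c := a + d) (by omega) (by omega)
    simp [succ_mem_support_iff hQ, this, hb]
  · rintro c hc ⟨hac, hcb⟩
    obtain ⟨c, rfl⟩ := Nat.exists_eq_add_one_of_ne_zero (by omega : c ≠ 0)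
    exact (succ_mem_support_iff hQ c).mp hc
      (iff_of_false (notMem (by omega) (by omega)) (notMem (by omega) (by omega)))

theorem mem_iff_mem_of_between_support (hQ : (Q : R⟦X⟧) = (1 - X) * indicatorSeries R s)
    {a b : ℕ} (hbetween : ∀ c ∈ Q.support, ¬ (a < c ∧ c < b)) {c : ℕ} (hac : a ≤ c)
    (hcb : c < b) : c ∈ s ↔ a ∈ s := by
  induction c, hac using Nat.le_induction with
  | base => rfl
  | succ c hac ih =>
    rw [← ih (by omega)]
    by_contra hchange
    exact hbetween (c + 1) ((succ_mem_support_iff hQ c).mpr hchange) ⟨by omega, hcb⟩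

theorem mem_of_forall_mem_Ico {p a : ℕ} (hp : 0 < p) (hs : ∀ n ∈ s, n + p ∈ s)
    (hrun : ∀ n, a ≤ n → n < a + p → n ∈ s) {n : ℕ} (hn : a ≤ n) : n ∈ s := by
  induction n using Nat.strong_induction_on with
  | _ n ih =>
    rcases lt_or_ge n (a + p) with hlt | hge
    · exact hrun n hn hlt
    · simpa [Nat.sub_add_cancel (by omega : p ≤ n)] using
        hs _ (ih (n - p) (by omega) (by omega))

theorem gapset_support_subset_Ico {S : AddSubmonoid ℕ} {p : ℕ} (hp : 0 < p) (hpS : p ∈ S)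
    (hQ : (Q : R⟦X⟧) = (1 - X) * indicatorSeries R (S : Set ℕ)) :
    gapset (Q.support : Set ℕ) ⊆ Set.Ico 1 p := by
  rintro d hd
  refine ⟨pos_of_mem_gapset hd, ?_⟩
  obtain ⟨a, b, -, hb, hab, hbetween, rfl⟩ := hd
  by_contra! hle
  have hconst {c : ℕ} := mem_iff_mem_of_between_support hQ hbetween (c := c)
  have ha : a ∈ S := by
    have hmod := Nat.mod_lt (a + p - 1) hp
    have hdiv := Nat.div_add_mod' (a + p - 1) p
    refine (hconst (c := (a + p - 1) / p * p) (by omega) (by omega)).mp ?_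
    simpa using S.nsmul_mem hpS ((a + p - 1) / p)
  have hall {n : ℕ} : a ≤ n → n ∈ (S : Set ℕ) :=
    mem_of_forall_mem_Ico hp (fun n hn => S.add_mem hn hpS)
      fun n hn hlt => (hconst hn (by omega)).mpr ha
  obtain ⟨c, rfl⟩ := Nat.exists_eq_add_one_of_ne_zero (by omega : b ≠ 0)
  exact (succ_mem_support_iff hQ c).mp hb (iff_of_true (hall (by omega)) (hall (by omega)))

end IndicatorSeries

section PairSemigroup

open PowerSeries
open scoped Polynomial

variable {R : Type*} {p q : ℕ}

theorem mem_closure_pair_iff_exists_natCast_eq (n : ℕ) :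
    n ∈ AddSubmonoid.closure {p, q} ↔ ∃ l, l * q ≤ n ∧ (n : ZMod p) = l * q := by
  simp only [AddSubmonoid.mem_closure_pair, smul_eq_mul]
  constructor
  · rintro ⟨x, y, rfl⟩
    exact ⟨y, by omega, by simp⟩
  · rintro ⟨l, hle, hl⟩
    have hmod : l * q ≡ n [MOD p] := (ZMod.natCast_eq_natCast_iff _ _ p).mp (by simp [hl])
    obtain ⟨x, hx⟩ := (Nat.modEq_iff_dvd' hle).mp hmod
    exact ⟨x, l, by rw [mul_comm x p]; omega⟩

theorem aperySet_closure_pair (hp : 0 < p) (hq : 0 < q) (hcop : p.Coprime q) :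
    aperySet (AddSubmonoid.closure {p, q} : Set ℕ) p = (Finset.range p).image (· * q) := by
  ext n
  simp only [aperySet, Set.mem_sdiff, SetLike.mem_coe, Set.mem_image, AddSubmonoid.mem_closure_pair,
    smul_eq_mul, Finset.coe_image, Finset.coe_range, Set.mem_Iio]
  constructor
  · rintro ⟨⟨x, y, rfl⟩, hmin⟩
    obtain rfl : x = 0 := by
      by_contra hx
      obtain ⟨x, rfl⟩ := Nat.exists_eq_add_one_of_ne_zero hx
      exact hmin ⟨_, ⟨x, y, rfl⟩, by ring⟩
    refine ⟨y, ?_, by simp⟩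
    by_contra! hpy
    obtain ⟨y, rfl⟩ := Nat.exists_eq_add_of_le' hpy
    obtain ⟨q, rfl⟩ := Nat.exists_eq_add_one_of_ne_zero hq.ne'
    exact hmin ⟨_, ⟨q, y, rfl⟩, by ring⟩
  · rintro ⟨j, hj, rfl⟩
    refine ⟨⟨0, j, by simp⟩, ?_⟩
    rintro ⟨_, ⟨x, y, rfl⟩, hxy⟩
    have hyj : y < j := by
      by_contra! hjy
      have := Nat.mul_le_mul_right q hjy
      omega
    have hdvd : p ∣ (j - y) * q := ⟨x + 1, by rw [Nat.sub_mul, ← hxy]; grind⟩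
    have := Nat.le_of_dvd (by omega) (hcop.dvd_of_dvd_mul_right hdvd)
    omega

theorem indicatorSeries_closure_pair_mul [Ring R] (hp : 0 < p) (hq : 0 < q)
    (hcop : p.Coprime q) :
    indicatorSeries R (AddSubmonoid.closure {p, q} : Set ℕ) * (1 - X ^ p) * (1 - X ^ q) =
      1 - X ^ (p * q) := by
  have hclosed : ∀ n ∈ (AddSubmonoid.closure {p, q} : Set ℕ),
      n + p ∈ (AddSubmonoid.closure {p, q} : Set ℕ) :=
    fun n hn => add_mem hn (AddSubmonoid.subset_closure (by simp))
  rw [indicatorSeries_mul_one_sub_X_pow hclosed, aperySet_closure_pair hp hq hcop,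
    indicatorSeries_coe_finset,
    Finset.sum_image fun i _ j _ hij => Nat.eq_of_mul_eq_mul_right hq hij]
  simp only [mul_comm _ q, pow_mul, geom_sum_mul_neg]

theorem coe_eq_one_sub_X_mul_indicatorSeries [CommRing R] (hp : 0 < p) (hq : 0 < q)
    (hcop : p.Coprime q) {Q : R[X]}
    (hQ : Q * ((1 - .X ^ p) * (1 - .X ^ q)) = (1 - .X ^ (p * q)) * (1 - .X)) :
    (Q : R⟦X⟧) =
      (1 - X) * indicatorSeries R (AddSubmonoid.closure {p, q} : Set ℕ) := by
  have hunit : IsUnit ((1 - X ^ p) * (1 - X ^ q) : R⟦X⟧) := by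
    simp [isUnit_iff_constantCoeff, hp.ne', hq.ne']
  apply hunit.mul_right_cancel
  calc (Q : R⟦X⟧) * ((1 - X ^ p) * (1 - X ^ q))
      = (1 - X ^ (p * q)) * (1 - X) := by
        simpa using congrArg (Polynomial.coeToPowerSeries.ringHom (R := R)) hQ
    _ = _ := by rw [← indicatorSeries_closure_pair_mul hp hq hcop]; ring

end PairSemigroup

section CircularGaps

variable {p : ℕ} {g : ZMod p}

/-- The `p`-periodic set of natural numbers whose residue mod `p` is one of `0, g, …, m * g`: the
first `m + 1` points of the orbit of `g` on the circle `ZMod p`, unrolled along `ℕ`. -/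
def initialOrbit (g : ZMod p) (m : ℕ) : Set ℕ :=
  {n | ∃ l ≤ m, (n : ZMod p) = l * g}

/-- The distances between neighbours that occur on the circle `ZMod p` while the points
`0, g, 2 * g, …` are put on it one after the other. -/
def circularGaps (g : ZMod p) : Set ℕ :=
  ⋃ m, gapset (initialOrbit g m)

theorem initialOrbit_mono : Monotone (initialOrbit g) :=
  fun _ _ hmm' _ ⟨l, hl, hn⟩ => ⟨l, hl.trans hmm', hn⟩

theorem add_mem_initialOrbit {m n : ℕ} (hn : n ∈ initialOrbit g m) :
    n + p ∈ initialOrbit g m := by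
  simpa [initialOrbit] using hn

theorem pos_of_mem_circularGaps {d : ℕ} (hd : d ∈ circularGaps g) : 0 < d :=
  have ⟨_, hd⟩ := Set.mem_iUnion.mp hd
  pos_of_mem_gapset hd

theorem self_mem_circularGaps (hp : 0 < p) (g : ZMod p) : p ∈ circularGaps g := by
  refine Set.mem_iUnion.mpr ⟨0, 0, p, ⟨0, le_rfl, by simp⟩, ⟨0, le_rfl, by simp⟩, hp, ?_, rfl⟩
  rintro c ⟨l, hl, hc⟩ ⟨hc0, hcp⟩
  have hdvd : p ∣ c := (ZMod.natCast_eq_zero_iff c p).mp (by simp [hc, Nat.le_zero.mp hl])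
  exact (Nat.le_of_dvd hc0 hdvd).not_gt hcp

theorem eq_of_natCast_eq_of_between {a b c c' : ℕ} (hb : b ≤ a + p) (hac : a < c)
    (hcb : c < b) (hac' : a < c') (hcb' : c' < b) (h : (c : ZMod p) = c') : c = c' := by
  have hmod : a + (c - a) ≡ a + (c' - a) [MOD p] := by
    simpa [hac.le, hac'.le] using (ZMod.natCast_eq_natCast_iff c c' p).mp h
  have := hmod.add_left_cancel'.eq_of_lt_of_lt (by omega) (by omega)
  omega

theorem exists_natCast_mul_eq [NeZero p] (hg : IsUnit g) (x : ZMod p) :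
    ∃ l < p, (l : ZMod p) * g = x :=
  ⟨(x * g⁻¹).val, ZMod.val_lt _, by
    rw [ZMod.natCast_zmod_val, mul_assoc, ZMod.inv_mul_of_unit g hg, mul_one]⟩

/-- `l * g` is the first of the points `0, g, 2 * g, …` that falls strictly between `a` and `b`
on the circle, and it does so at `c`. -/
structure IsFirstHit (g : ZMod p) (a b l c : ℕ) : Prop where
  left_lt : a < c
  lt_right : c < b
  natCast_eq : (c : ZMod p) = l * g
  natCast_ne : ∀ l' < l, ∀ c', a < c' → c' < b → (c' : ZMod p) ≠ l' * g

theorem exists_isFirstHit [NeZero p] (hg : IsUnit g) {a b : ℕ} (hab : a + 1 < b) :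
    ∃ l c, IsFirstHit g a b l c := by
  classical
  have hex : ∃ l : ℕ, ∃ c, a < c ∧ c < b ∧ (c : ZMod p) = l * g := by
    obtain ⟨l, -, hl⟩ := exists_natCast_mul_eq hg ((a + 1 : ℕ) : ZMod p)
    exact ⟨l, a + 1, a.lt_succ_self, hab, hl.symm⟩
  obtain ⟨c, hac, hcb, hc⟩ := Nat.find_spec hex
  exact ⟨Nat.find hex, c, hac, hcb, hc,
    fun l' hl' c' hac' hcb' hc' => Nat.find_min hex hl' ⟨c', hac', hcb', hc'⟩⟩

namespace IsFirstHit

variable {a b l c : ℕ}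

theorem eq_of_mem_initialOrbit (h : IsFirstHit g a b l c) (hb : b ≤ a + p) {c' : ℕ}
    (hc' : c' ∈ initialOrbit g l) (hac' : a < c') (hcb' : c' < b) : c' = c := by
  obtain ⟨l', hl', hcast⟩ := hc'
  rcases hl'.lt_or_eq with hlt | rfl
  · exact absurd hcast (h.natCast_ne l' hlt c' hac' hcb')
  · exact eq_of_natCast_eq_of_between hb hac' hcb' h.left_lt h.lt_right
      (hcast.trans h.natCast_eq.symm)

theorem sub_left_mem_circularGaps (h : IsFirstHit g a b l c) (hb : b ≤ a + p)
    (ha : a ∈ initialOrbit g l) : c - a ∈ circularGaps g := by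
  refine Set.mem_iUnion.mpr ⟨l, a, c, ha, ⟨l, le_rfl, h.natCast_eq⟩, h.left_lt, ?_, rfl⟩
  rintro c' hc' ⟨hac', hcc'⟩
  exact hcc'.ne (h.eq_of_mem_initialOrbit hb hc' hac' (hcc'.trans h.lt_right))

theorem right_sub_mem_circularGaps (h : IsFirstHit g a b l c) (hb : b ≤ a + p)
    (hbl : b ∈ initialOrbit g l) : b - c ∈ circularGaps g := by
  refine Set.mem_iUnion.mpr ⟨l, c, b, ⟨l, le_rfl, h.natCast_eq⟩, hbl, h.lt_right, ?_, rfl⟩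
  rintro c' hc' ⟨hcc', hcb'⟩
  exact hcc'.ne' (h.eq_of_mem_initialOrbit hb hc' (h.left_lt.trans hcc') hcb')

theorem le_two_mul_of_midpoint (h : IsFirstHit g a b l c) (hg : IsUnit g) {i j : ℕ} (hi : i < l)
    (hj : j < l) (ha : (a : ZMod p) = i * g) (hb : (b : ZMod p) = j * g)
    (hmid : c + c = a + b) : p ≤ 2 * l := by
  have hcast : ((i + j : ℕ) : ZMod p) = (2 * l : ℕ) := by
    apply hg.mul_right_cancel
    calc ((i + j : ℕ) : ZMod p) * g = (a + b : ℕ) := by push_cast [ha, hb]; ring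
      _ = (c + c : ℕ) := by rw [hmid]
      _ = (2 * l : ℕ) * g := by push_cast [h.natCast_eq]; ring
  have hdvd : p ∣ 2 * l - (i + j) :=
    (Nat.modEq_iff_dvd' (by omega)).mp ((ZMod.natCast_eq_natCast_iff _ _ p).mp hcast)
  exact (Nat.le_of_dvd (by omega) hdvd).trans (Nat.sub_le _ _)

/-- With `u * g = 1`, the neighbours `c - 1` and `c + 1` of `c` are the points of index `l - u` and
`l + u - p`; when `p ≤ 2 * l`, one of these is a natural number smaller than `l`. -/
theorem left_eq_or_right_eq_of_le_two_mul (h : IsFirstHit g a b l c) (hg : IsUnit g)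
    (hp : 1 < p) (hl : p ≤ 2 * l) : c = a + 1 ∨ b = c + 1 := by
  by_contra! hne
  have : NeZero p := ⟨by omega⟩
  have := h.left_lt
  have := h.lt_right
  obtain ⟨u, hup, hu⟩ := exists_natCast_mul_eq hg 1
  have hu0 : u ≠ 0 := by
    have : Fact (1 < p) := ⟨hp⟩
    rintro rfl
    simp at hu
  rcases le_or_gt u l with hul | hlu
  · refine h.natCast_ne (l - u) (by omega) (c - 1) (by omega) (by omega) ?_
    rw [Nat.cast_sub (by omega : 1 ≤ c), Nat.cast_sub hul, sub_mul, hu, h.natCast_eq,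
      Nat.cast_one]
  · refine h.natCast_ne (l + u - p) (by omega) (c + 1) (by omega) (by omega) ?_
    rw [Nat.cast_sub (by omega : p ≤ l + u), Nat.cast_add, Nat.cast_add, add_sub_right_comm,
      ZMod.natCast_self, sub_zero, add_mul, hu, h.natCast_eq, Nat.cast_one]

end IsFirstHit

theorem exists_lt_add_eq_of_mem_circularGaps [NeZero p] (hg : IsUnit g) {d : ℕ}
    (hd : d ∈ circularGaps g) (h2d : 2 < d) :
    ∃ x ∈ circularGaps g, ∃ y ∈ circularGaps g, x < y ∧ x + y = d := by
  obtain ⟨m, hdm⟩ := Set.mem_iUnion.mp hd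
  have hdp : d ≤ p := le_of_mem_gapset (NeZero.pos p) (fun _ => add_mem_initialOrbit) hdm
  obtain ⟨a, b, ha, hb, hab, hbetween, rfl⟩ := hdm
  obtain ⟨l, c, h⟩ := exists_isFirstHit hg (by omega : a + 1 < b)
  have hac := h.left_lt
  have hcb := h.lt_right
  have hml : m < l := by
    by_contra! hlm
    exact hbetween c ⟨l, hlm, h.natCast_eq⟩ ⟨hac, hcb⟩
  have hleft : c - a ∈ circularGaps g :=
    h.sub_left_mem_circularGaps (by omega) (initialOrbit_mono hml.le ha)
  have hright : b - c ∈ circularGaps g :=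
    h.right_sub_mem_circularGaps (by omega) (initialOrbit_mono hml.le hb)
  rcases lt_trichotomy (c - a) (b - c) with hlt | hmid | hgt
  · exact ⟨_, hleft, _, hright, hlt, by omega⟩
  · obtain ⟨i, hi, hai⟩ := ha
    obtain ⟨j, hj, hbj⟩ := hb
    have hpl : p ≤ 2 * l := h.le_two_mul_of_midpoint hg (by omega) (by omega) hai hbj (by omega)
    have := h.left_eq_or_right_eq_of_le_two_mul hg (by omega) hpl
    omega
  · exact ⟨_, hright, _, hleft, hgt, by omega⟩

end CircularGaps

section LowerBound

variable {p q : ℕ}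

/-- The translate of the arc starts at `i * q` if `j ≤ i` and ends at `j * q` otherwise. Below
`(m + 1) * q`, only multiples `l * q` with `l ≤ m` contribute elements of `⟨p, q⟩` inside it. -/
theorem exists_translate_mem_closure_pair {m i j d : ℕ} (hdq : d ≤ q) (hi : i ≤ m) (hj : j ≤ m)
    (hd : ((i * q + d : ℕ) : ZMod p) = j * q) :
    ∃ a : ℕ, (a : ZMod p) = i * q ∧ a ∈ AddSubmonoid.closure {p, q} ∧
      a + d ∈ AddSubmonoid.closure {p, q} ∧ a + d ≤ (m + 1) * q := by
  simp only [mem_closure_pair_iff_exists_natCast_eq]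
  rcases le_or_gt j i with hji | hij
  · have hjiq := Nat.mul_le_mul_right q hji
    have himq := Nat.mul_le_mul_right q (Nat.add_le_add_right hi 1)
    rw [Nat.add_one_mul i] at himq
    exact ⟨i * q, by simp, ⟨i, le_rfl, by simp⟩, ⟨j, by omega, hd⟩, by omega⟩
  · have hijq := Nat.mul_le_mul_right q (Nat.succ_le_of_lt hij)
    have hjmq := Nat.mul_le_mul_right q (hj.trans (Nat.le_add_right m 1))
    rw [Nat.succ_mul] at hijq
    have hcast : ((j * q - d : ℕ) : ZMod p) = i * q := by
      rw [Nat.cast_sub (by omega), sub_eq_iff_eq_add]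
      simpa using hd.symm
    refine ⟨j * q - d, hcast, ⟨i, by omega, hcast⟩, ⟨j, by omega, ?_⟩, by omega⟩
    rw [Nat.sub_add_cancel (by omega), Nat.cast_mul]

theorem circularGaps_subset_gapset_closure_pair (hp : 0 < p) (hpq : p ≤ q) :
    circularGaps (q : ZMod p) ⊆ gapset (AddSubmonoid.closure {p, q} : Set ℕ) := by
  refine Set.iUnion_subset fun m d hd => ?_
  have hdp : d ≤ p := le_of_mem_gapset hp (fun _ => add_mem_initialOrbit) hd
  obtain ⟨a, b, ⟨i, hi, ha⟩, ⟨j, hj, hb⟩, hab, hbetween, rfl⟩ := hd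
  obtain ⟨a', ha', ha'S, hb'S, hle⟩ :=
    exists_translate_mem_closure_pair (p := p) (d := b - a) (hdp.trans hpq) hi hj (by
      rw [← hb, Nat.cast_add, Nat.cast_mul, ← ha, ← Nat.cast_add, Nat.add_sub_cancel' hab.le])
  refine ⟨a', a' + (b - a), ha'S, hb'S, by omega, ?_, by omega⟩
  rintro n hn ⟨han, hnb⟩
  obtain ⟨l, hln, hl⟩ := (mem_closure_pair_iff_exists_natCast_eq n).mp hn
  have hlm : l ≤ m := by
    have : l * q < (m + 1) * q := by omega
    exact Nat.lt_succ_iff.mp (Nat.lt_of_mul_lt_mul_right this)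
  have hback : ((a + (n - a') : ℕ) : ZMod p) = l * q := by
    rw [Nat.cast_add, Nat.cast_sub han.le, ha', ha, hl]
    ring
  exact hbetween (a + (n - a')) ⟨l, hlm, hback⟩ ⟨by omega, by omega⟩

theorem ncard_inter_Ioc_lt {E : Set ℕ} {a b : ℕ} (hab : a < b) (hb : b ∈ E) (h1b : 1 < b) :
    (E ∩ Set.Ioc 1 a).ncard < (E ∩ Set.Ioc 1 b).ncard := by
  refine Set.ncard_lt_ncard ((Set.ssubset_iff_of_subset ?_).mpr ?_)
    ((Set.finite_Ioc 1 b).inter_of_right E)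
  · exact Set.inter_subset_inter_right E (Set.Ioc_subset_Ioc_right hab.le)
  · exact ⟨b, ⟨hb, h1b, le_rfl⟩, fun h => h.2.2.not_gt hab⟩

theorem le_fib_ncard_inter_Ioc {E : Set ℕ} (hpos : ∀ d ∈ E, 0 < d)
    (hsplit : ∀ d ∈ E, 2 < d → ∃ x ∈ E, ∃ y ∈ E, x < y ∧ x + y = d) {d : ℕ} (hd : d ∈ E) :
    d ≤ Nat.fib ((E ∩ Set.Ioc 1 d).ncard + 2) := by
  induction d using Nat.strong_induction_on with
  | _ d ih =>
    rcases le_or_gt d 1 with hd1 | hd1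
    · exact hd1.trans (Nat.fib_pos.mpr (by omega))
    rcases (Nat.succ_le_of_lt hd1).eq_or_lt' with rfl | hd2
    · have hcard : 0 < (E ∩ Set.Ioc 1 2).ncard :=
        Nat.zero_lt_of_lt (ncard_inter_Ioc_lt one_lt_two hd one_lt_two)
      calc 2 = Nat.fib 3 := rfl
        _ ≤ _ := Nat.fib_mono (Nat.add_le_add_right hcard 2)
    · obtain ⟨x, hx, y, hy, hxy, rfl⟩ := hsplit d hd hd2
      have hx0 := hpos x hx
      have hcard_y := ncard_inter_Ioc_lt hxy hy (by omega)
      have hcard := ncard_inter_Ioc_lt (by omega : y < x + y) hd hd1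
      calc x + y ≤ Nat.fib ((E ∩ Set.Ioc 1 x).ncard + 2) +
            Nat.fib ((E ∩ Set.Ioc 1 y).ncard + 2) :=
            add_le_add (ih x (by omega) hx) (ih y (by omega) hy)
        _ ≤ Nat.fib (E ∩ Set.Ioc 1 (x + y)).ncard +
            Nat.fib ((E ∩ Set.Ioc 1 (x + y)).ncard + 1) :=
            add_le_add (Nat.fib_mono (by omega)) (Nat.fib_mono (by omega))
        _ = _ := Nat.fib_add_two.symm

open PowerSeries in
theorem le_fib_ncard_gapset_support {R : Type*} [Ring R] [Nontrivial R] (hp : 0 < p)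
    (hpq : p ≤ q) (hcop : p.Coprime q) {Q : Polynomial R}
    (hQ : (Q : R⟦X⟧) = (1 - X) * indicatorSeries R (AddSubmonoid.closure {p, q} : Set ℕ)) :
    p ≤ Nat.fib ((gapset (Q.support : Set ℕ)).ncard + 2) := by
  have : NeZero p := ⟨hp.ne'⟩
  have hunit : IsUnit (q : ZMod p) := (ZMod.isUnit_iff_coprime q p).mpr hcop.symm
  set E := circularGaps (q : ZMod p)
  have hE : p ≤ Nat.fib ((E ∩ Set.Ioc 1 p).ncard + 2) :=
    le_fib_ncard_inter_Ioc (fun _ => pos_of_mem_circularGaps)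
      (fun _ => exists_lt_add_eq_of_mem_circularGaps hunit) (self_mem_circularGaps hp _)
  have hfinite : (gapset (Q.support : Set ℕ)).Finite :=
    (Set.finite_Ico 1 p).subset
      (gapset_support_subset_Ico hp (AddSubmonoid.subset_closure (by simp)) hQ)
  refine hE.trans (Nat.fib_mono (Nat.add_le_add_right ?_ 2))
  refine Set.ncard_le_ncard_of_injOn (· - 1) ?_ ?_ hfinite
  · rintro d ⟨hd, h1d, -⟩
    refine mem_gapset_support_of_succ_mem_gapset hQ (Nat.sub_pos_of_lt h1d) ?_
    rw [Nat.sub_add_cancel h1d.le]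
    exact circularGaps_subset_gapset_closure_pair hp hpq hd
  · rintro d ⟨-, h1d, -⟩ e ⟨-, h1e, -⟩ (hde : d - 1 = e - 1)
    omega

end LowerBound

theorem eq_fib_succ {F : ℕ → ℕ} (hF1 : F 1 = 1) (hF2 : F 2 = 2)
    (hFrec : ∀ k, 1 ≤ k → F (k + 2) = F (k + 1) + F k) {k : ℕ} (hk : 1 ≤ k) :
    F k = Nat.fib (k + 1) := by
  induction k using Nat.twoStepInduction with
  | zero => omega
  | one => simp [hF1]
  | more k ih ih' =>
    rcases k.eq_zero_or_pos with rfl | hk0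
    · simp [hF2, Nat.fib_add_two]
    · rw [hFrec k hk0, ih hk0, ih' (by omega), Nat.fib_add_two (n := k + 1), add_comm]

open Polynomial in
theorem stmt_19_general {R : Type*} [CommRing R] [Nontrivial R] {p q : ℕ} (hp : 0 < p)
    (hpq : p ≤ q) (hcop : Nat.Coprime p q) {Q : R[X]}
    (hQ : Q * ((1 - X ^ p) * (1 - X ^ q)) = (1 - X ^ (p * q)) * (1 - X))
    {F : ℕ → ℕ} (hF1 : F 1 = 1) (hF2 : F 2 = 2)
    (hFrec : ∀ k, 1 ≤ k → F (k + 2) = F (k + 1) + F k) :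
    (gapset (Q.support : Set ℕ)).ncard ≤ p - 1 ∧
      ∀ k, 1 ≤ k → F k < p → k ≤ (gapset (Q.support : Set ℕ)).ncard := by
  have hseries := coe_eq_one_sub_X_mul_indicatorSeries hp (hp.trans_le hpq) hcop hQ
  constructor
  · have hsub := gapset_support_subset_Ico hp (AddSubmonoid.subset_closure (by simp)) hseries
    calc (gapset (Q.support : Set ℕ)).ncard ≤ (Set.Ico 1 p).ncard := Set.ncard_le_ncard hsub
      _ = p - 1 := by rw [← Finset.coe_Ico, Set.ncard_coe_finset, Nat.card_Ico]
  · intro k hk hFk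
    rw [eq_fib_succ hF1 hF2 hFrec hk] at hFk
    have := Nat.fib_mono.reflect_lt
      (hFk.trans_le (le_fib_ncard_gapset_support hp hpq hcop hseries))
    omega

open Polynomial in
/-- Theorem 3: the number of distinct gaps of the binary inclusion–exclusion
polynomial satisfies `#G(p,q) ≤ p - 1` and `#G(p,q) ≥ k`, where `k` is determined by
`F_k < p ≤ F_{k+1}` for the Fibonacci numbers `F₁ = 1, F₂ = 2, F_{k+1} = F_k + F_{k-1}`. -/
theorem stmt_19 (p q : ℕ) (hp : 3 ≤ p) (hpq : p < q) (hcop : Nat.Coprime p q)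
    (Q : Polynomial ℤ)
    (hQ : Q * ((1 - X ^ p) * (1 - X ^ q)) = (1 - X ^ (p * q)) * (1 - X))
    (F : ℕ → ℕ) (hF1 : F 1 = 1) (hF2 : F 2 = 2)
    (hFrec : ∀ k, 1 ≤ k → F (k + 2) = F (k + 1) + F k) :
    Set.ncard {d : ℕ | ∃ a b : ℕ, a ∈ Q.support ∧ b ∈ Q.support ∧ a < b ∧
        (∀ c ∈ Q.support, ¬ (a < c ∧ c < b)) ∧ d = b - a} ≤ p - 1 ∧
    ∀ k : ℕ, 1 ≤ k → F k < p → p ≤ F (k + 1) →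
      k ≤ Set.ncard {d : ℕ | ∃ a b : ℕ, a ∈ Q.support ∧ b ∈ Q.support ∧ a < b ∧
        (∀ c ∈ Q.support, ¬ (a < c ∧ c < b)) ∧ d = b - a} := by
  have ⟨hupper, hlower⟩ := stmt_19_general (by omega : 0 < p) hpq.le hcop hQ hF1 hF2 hFrec
  exact ⟨hupper, fun k hk hFk _ => hlower k hk hFk⟩
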